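/- If e₁ and e₂ are parallel edges of a graph G (two edges joining the same pair of vertices), then H^i(G) ≅ H^i(G−e₂) for all i; consequently the graph cohomology is unchanged when multiple edges are replaced by single edges. -/

import Mathlib

/-- A finite multigraph (possibly with loops and multiple edges), with
vertex type `V` and edges indexed by `Fin n`, edge `e` having endpoints `ends e`. -/
structure OGraph where
  V : Type
  [finV : Fintype V]
  n : ℕ
  ends : Fin n → Sym2 V

attribute [instance] OGraph.finV

namespace OGraph

variable (G : OGraph)

/-- Two vertices are related if some edge in `s` joins them. -/
def rel (s : Finset (Fin G.n)) (u v : G.V) : Prop := ∃ e ∈ s, G.ends e = s(u, v)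

/-- The set of connected components of the spanning subgraph `[G:s]`. -/
def Comp (s : Finset (Fin G.n)) : Type := Quot (G.rel s)

/-- `k(s)`: the number of connected components of the spanning subgraph `[G:s]`. -/
noncomputable def ncomp (s : Finset (Fin G.n)) : ℕ := Nat.card (G.Comp s)

/-- The number of proper colorings of `G` with `m` colors: the value `P_G(m)` of
the chromatic polynomial at the natural number `m`. -/
noncomputable def chromatic (m : ℕ) : ℕ :=
  Nat.card {c : G.V → Fin m // ∀ e u v, G.ends e = s(u, v) → c u ≠ c v}

end OGraph

namespace OGraph

noncomputable instance finiteQuot {V : Type} [Finite V] (r : V → V → Prop) :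
    Fintype (Quot r) :=
  letI : Finite (Quot r) :=
    Finite.of_surjective (Quot.mk r) fun q => Quot.inductionOn q fun v => ⟨v, rfl⟩
  Fintype.ofFinite _

/-- The graph `G − e` obtained from `G` by deleting the edge `e`; the ordering of
the remaining edges is inherited from `G`. -/
def delG (V : Type) [Fintype V] {n : ℕ} (ends : Fin (n + 1) → Sym2 V)
    (e : Fin (n + 1)) : OGraph :=
  ⟨V, n, fun k => ends (e.succAbove k)⟩

/-- The graph `G / e` obtained from `G` by contracting the edge `e` (identifying its
two endpoints and removing `e`); the ordering of the remaining edges is inherited. -/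
noncomputable def ctrG (V : Type) [Fintype V] {n : ℕ} (ends : Fin (n + 1) → Sym2 V)
    (e : Fin (n + 1)) : OGraph :=
  ⟨Quot (fun u v : V => ends e = s(u, v)), n,
    fun k => (ends (e.succAbove k)).map (Quot.mk _)⟩

end OGraph

namespace OGraph

/-- The map on quotients induced by an implication of relations. -/
def qmap {V : Type} {r r' : V → V → Prop} (h : ∀ u v, r u v → r' u v) :
    Quot r → Quot r' :=
  Quot.lift (Quot.mk r') fun u v huv => Quot.sound (h u v huv)

variable (G : OGraph)

/-- An enhanced state: a subset `s` of the edges together with an assignment of a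
color (`1` or `x`; a component is "colored `x`" when the predicate holds) to each
connected component of the spanning subgraph `[G:s]`. -/
abbrev EState := Σ s : Finset (Fin G.n), (G.Comp s → Prop)

/-- `j(S)`: the number of components colored `x` in the enhanced state `S`. -/
noncomputable def jdeg (S : G.EState) : ℕ := Nat.card {k : G.Comp S.1 // S.2 k}

open Classical in
/-- The enhanced state(s) obtained from `S` by adding the edge `e`: zero if `e`
already belongs to `S` or if the added edge merges two components both colored `x`
(the product `x∗x = 0`); otherwise the enhanced state on `insert e s` whose
coloring is obtained from that of `S` using the product
`1∗1 = 1`, `1∗x = x∗1 = x`. -/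
noncomputable def addEdge (S : G.EState) (e : Fin G.n) : G.EState →₀ ℤ :=
  if e ∈ S.1 then 0
  else
    let p : G.Comp S.1 → G.Comp (insert e S.1) :=
      qmap fun _ _ huv => huv.elim fun f hf => ⟨f, Finset.mem_insert_of_mem hf.1, hf.2⟩
    if ∃ k1 k2 : G.Comp S.1, k1 ≠ k2 ∧ p k1 = p k2 ∧ S.2 k1 ∧ S.2 k2 then 0
    else Finsupp.single ⟨insert e S.1, fun K => ∃ k, p k = K ∧ S.2 k⟩ 1

/-- The differential applied to a single enhanced state: the signed sum, over all
edges `e` not in `S`, of the states obtained by adding `e`; the sign is `(-1)^{n(e)}`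
where `n(e)` is the number of edges of `S` ordered before `e`. -/
noncomputable def dState (S : G.EState) : G.EState →₀ ℤ :=
  ∑ e : Fin G.n, ((-1 : ℤ) ^ (S.1.filter fun f => f < e).card) • G.addEdge S e

/-- The differential of the graph cohomology complex, as a linear endomorphism of
the free `ℤ`-module generated by all enhanced states. -/
noncomputable def diff : (G.EState →₀ ℤ) →ₗ[ℤ] (G.EState →₀ ℤ) :=
  Finsupp.lsum ℤ fun S => LinearMap.toSpanSingleton ℤ _ (G.dState S)

/-- The chain group `C^{i,j}(G)`: the free `ℤ`-module spanned by the enhanced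
states with `i` edges and `j` components colored `x`, as a submodule of the free
module on all enhanced states. -/
noncomputable def Cmod (i j : ℕ) : Submodule ℤ (G.EState →₀ ℤ) :=
  Finsupp.supported ℤ ℤ {S : G.EState | S.1.card = i ∧ G.jdeg S = j}

/-- The cocycles of bidegree `(i,j)`. -/
noncomputable def Zmod (i j : ℕ) : Submodule ℤ (G.EState →₀ ℤ) :=
  LinearMap.ker G.diff ⊓ G.Cmod i j

/-- The coboundaries: `0` for `i = 0`, the image of `C^{i,j}` for `i + 1`. -/
noncomputable def Bmod : ℕ → ℕ → Submodule ℤ (G.EState →₀ ℤ)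
  | 0, _ => ⊥
  | i + 1, j => Submodule.map G.diff (G.Cmod i j)

/-- The graph cohomology group `H^{i,j}(G)` (cocycles modulo coboundaries in
bidegree `(i,j)`). -/
noncomputable def Hmod (i j : ℕ) : Type :=
  (G.Zmod i j).toAddSubgroup ⧸
    (AddSubgroup.comap (G.Zmod i j).toAddSubgroup.subtype (G.Bmod i j).toAddSubgroup)

noncomputable instance (i j : ℕ) : AddCommGroup (G.Hmod i j) := by
  delta Hmod; infer_instance

end OGraph

/-!
Restriction to the states that avoid `e₂` is a surjective cochain map `C(G) → C(G − e₂)`, with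
kernel spanned by the states containing `e₂`. On that kernel, adding or removing `e₁` never changes
the components, so removing `e₁` (up to sign) is a contracting homotopy `h`. A surjection with
contractible kernel is a homotopy equivalence: `id - (d ∘ h + h ∘ d)` vanishes on the kernel, hence
factors through `C(G − e₂)` and yields the inverse up to homotopy.
-/

theorem linearMap_mem_of_mem_supported {R α M : Type*} [Semiring R] [AddCommMonoid M] [Module R M]
    {A : Set α} {N : Submodule R M} {f : (α →₀ R) →ₗ[R] M}
    (hf : ∀ a ∈ A, f (Finsupp.single a 1) ∈ N) {x : α →₀ R} (hx : x ∈ Finsupp.supported R R A) :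
    f x ∈ N := by
  have hle : Finsupp.supported R R A ≤ N.comap f := by
    rw [Finsupp.supported_eq_span_single, Submodule.span_le]
    rintro _ ⟨a, ha, rfl⟩
    exact hf a ha
  exact hle hx

namespace OGraph

/-! ### Signs -/

section Sign

variable {α : Type*} [LinearOrder α] {s : Finset α} {e f : α}

/-- The sign `(-1) ^ n(e)` of the differential, `n(e)` being the number of elements of `s`
below `e`. -/
def edgeSign (s : Finset α) (e : α) : ℤ := (-1) ^ (s.filter fun f => f < e).card

theorem edgeSign_mul_self (s : Finset α) (e : α) : edgeSign s e * edgeSign s e = 1 := by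
  rw [edgeSign, ← mul_pow, neg_one_mul, neg_neg, one_pow]

theorem edgeSign_insert (he : e ∉ s) (f : α) :
    edgeSign (insert e s) f = edgeSign s f * if e < f then -1 else 1 := by
  unfold edgeSign
  rw [Finset.filter_insert]
  split_ifs
  · rw [Finset.card_insert_of_notMem (by simp [he]), pow_succ]
  · rw [mul_one]

theorem edgeSign_insert_self (he : e ∉ s) : edgeSign (insert e s) e = edgeSign s e := by
  rw [edgeSign_insert he, if_neg (lt_irrefl e), mul_one]

theorem edgeSign_insert_mul_edgeSign_insert (he : e ∉ s) (hf : f ∉ s) (hef : e ≠ f) :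
    edgeSign (insert e s) f * edgeSign (insert f s) e = -(edgeSign s e * edgeSign s f) := by
  rw [edgeSign_insert he, edgeSign_insert hf]
  rcases hef.lt_or_gt with h | h <;> rw [if_pos h, if_neg h.not_gt] <;> ring

theorem edgeSign_mul_edgeSign_insert_comm (he : e ∉ s) (hf : f ∉ s) (hef : e ≠ f) :
    edgeSign s e * edgeSign (insert e s) f = -(edgeSign s f * edgeSign (insert f s) e) := by
  rw [edgeSign_insert he, edgeSign_insert hf]
  rcases hef.lt_or_gt with h | h <;> rw [if_pos h, if_neg h.not_gt] <;> ring

theorem edgeSign_map {β : Type*} [LinearOrder β] (φ : α ↪o β) (s : Finset α) (e : α) :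
    edgeSign (s.map φ.toEmbedding) (φ e) = edgeSign s e := by
  simp [edgeSign, Finset.filter_map]

end Sign

/-! ### Enlarging the edge set of a state -/

section Push

variable {G : OGraph} {s t u : Finset (Fin G.n)}

/-- The map sending a component of `[G:s]` to the component of `[G:t]` containing it. -/
def Comp.map (h : s ⊆ t) : G.Comp s → G.Comp t :=
  qmap fun _ _ ⟨e, he, huv⟩ => ⟨e, h he, huv⟩

theorem Comp.map_map (h : s ⊆ t) (h' : t ⊆ u) (k : G.Comp s) :
    Comp.map h' (Comp.map h k) = Comp.map (h.trans h') k := by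
  induction k using Quot.ind
  rfl

theorem Comp.map_refl (k : G.Comp s) : Comp.map (Finset.Subset.refl s) k = k := by
  induction k using Quot.ind
  rfl

theorem Comp.map_surjective (h : s ⊆ t) : Function.Surjective (Comp.map h : G.Comp s → _) := by
  intro k
  induction k using Quot.ind with
  | mk v => exact ⟨Quot.mk _ v, rfl⟩

theorem Comp.map_injective_of_rel (h : s ⊆ t) (hrel : ∀ u v, G.rel t u v → G.rel s u v) :
    Function.Injective (Comp.map h : G.Comp s → _) := by
  have hinv : Function.LeftInverse (qmap hrel : G.Comp t → G.Comp s) (Comp.map h) := by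
    intro k
    induction k using Quot.ind
    rfl
  exact hinv.injective

/-- The state on the larger edge set `t` in which a component is coloured `x` as soon as it contains
a component coloured `x` in `S`. -/
abbrev pushState (S : G.EState) (h : S.1 ⊆ t) : G.EState :=
  ⟨t, fun K => ∃ k, Comp.map h k = K ∧ S.2 k⟩

/-- The state on the smaller edge set `t` in which each component inherits the colour of the
component of `S` containing it. -/
abbrev pullState (S : G.EState) (h : t ⊆ S.1) : G.EState :=
  ⟨t, fun k => S.2 (Comp.map h k)⟩

theorem pushState_pushState {S : G.EState} (h : S.1 ⊆ t) (h' : t ⊆ u) :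
    pushState (pushState S h) h' = pushState S (h.trans h') := by
  refine congrArg (Sigma.mk u) (funext fun K => propext ⟨?_, ?_⟩)
  · rintro ⟨_, rfl, k, rfl, hk⟩
    exact ⟨k, (Comp.map_map h h' k).symm, hk⟩
  · rintro ⟨k, rfl, hk⟩
    exact ⟨_, Comp.map_map h h' k, k, rfl, hk⟩

theorem pushState_refl (S : G.EState) : pushState S (Finset.Subset.refl S.1) = S :=
  congrArg (Sigma.mk S.1) (by simp [Comp.map_refl])

theorem pushState_pullState {S : G.EState} (h : t ⊆ S.1) : pushState (pullState S h) h = S := by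
  refine congrArg (Sigma.mk S.1) (funext fun K => propext ⟨?_, fun hK => ?_⟩)
  · rintro ⟨k, rfl, hk⟩
    exact hk
  · obtain ⟨k, rfl⟩ := Comp.map_surjective h K
    exact ⟨k, rfl, hK⟩

theorem pullState_pushState {S : G.EState} (h : S.1 ⊆ t)
    (hinj : Function.Injective (Comp.map h : G.Comp S.1 → _)) :
    pullState (pushState S h) h = S := by
  refine congrArg (Sigma.mk S.1) (funext fun k => propext ⟨?_, fun hk => ⟨k, rfl, hk⟩⟩)
  rintro ⟨k', hk', hx⟩
  rwa [← hinj hk']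

theorem setOf_pushState {S : G.EState} (h : S.1 ⊆ t) :
    {K | (pushState S h).2 K} = Comp.map h '' {k | S.2 k} :=
  Set.ext fun _ => exists_congr fun _ => and_comm

theorem jdeg_pushState {S : G.EState} (h : S.1 ⊆ t)
    (hinj : Set.InjOn (Comp.map h) {k | S.2 k}) : G.jdeg (pushState S h) = G.jdeg S := by
  change Nat.card ↥{K | (pushState S h).2 K} = _
  rw [setOf_pushState]
  exact Nat.card_image_of_injOn hinj

/-- The free module on all enhanced states, i.e. the sum of all the groups `C^{i,j}(G)`. -/
abbrev Cochains (G : OGraph) : Type := G.EState →₀ ℤ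

open Classical in
/-- The image of `S` under the product map that enlarges its edge set to `t`: zero if two components
coloured `x` get merged, since `x∗x = 0`. The junk value for `¬ S.1 ⊆ t` is zero. -/
noncomputable def push (S : G.EState) (t : Finset (Fin G.n)) : G.Cochains :=
  if h : S.1 ⊆ t then
    if Set.InjOn (Comp.map h) {k | S.2 k} then Finsupp.single (pushState S h) 1 else 0
  else 0

theorem push_of_injOn {S : G.EState} (h : S.1 ⊆ t) (hinj : Set.InjOn (Comp.map h) {k | S.2 k}) :
    push S t = Finsupp.single (pushState S h) 1 := by
  rw [push, dif_pos h, if_pos hinj]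

theorem push_of_not_injOn {S : G.EState} (h : S.1 ⊆ t)
    (hinj : ¬ Set.InjOn (Comp.map h) {k | S.2 k}) : push S t = 0 := by
  rw [push, dif_pos h, if_neg hinj]

theorem push_self (S : G.EState) : push S S.1 = Finsupp.single S 1 := by
  have hinj : Function.Injective (Comp.map (Finset.Subset.refl S.1) : G.Comp S.1 → _) :=
    Comp.map_injective_of_rel _ fun _ _ => id
  rw [push_of_injOn _ hinj.injOn, pushState_refl]

theorem injOn_map_pushState_iff {S : G.EState} (h : S.1 ⊆ t) (h' : t ⊆ u)
    (hinj : Set.InjOn (Comp.map h) {k | S.2 k}) :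
    Set.InjOn (Comp.map h') {k | (pushState S h).2 k} ↔
      Set.InjOn (Comp.map (h.trans h')) {k | S.2 k} := by
  have hcomp : (Comp.map (h.trans h') : G.Comp S.1 → _) = Comp.map h' ∘ Comp.map h :=
    funext fun k => (Comp.map_map h h' k).symm
  rw [hcomp, hinj.comp_iff, setOf_pushState]

theorem push_pushState {S : G.EState} (h : S.1 ⊆ t) (h' : t ⊆ u)
    (hinj : Set.InjOn (Comp.map h) {k | S.2 k}) : push (pushState S h) u = push S u := by
  have hiff := injOn_map_pushState_iff h h' hinj
  by_cases hinj' : Set.InjOn (Comp.map (h.trans h')) {k | S.2 k}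
  · rw [push_of_injOn _ hinj', push_of_injOn (S := pushState S h) h' (hiff.2 hinj'),
      pushState_pushState]
  · rw [push_of_not_injOn _ hinj',
      push_of_not_injOn (S := pushState S h) h' fun hc => hinj' (hiff.1 hc)]

theorem push_eq_zero_of_subset {S : G.EState} (h : S.1 ⊆ t) (h' : t ⊆ u)
    (hinj : ¬ Set.InjOn (Comp.map h) {k | S.2 k}) : push S u = 0 := by
  refine push_of_not_injOn (h.trans h') fun hinj' => hinj fun k₁ hk₁ k₂ hk₂ heq => ?_
  refine hinj' hk₁ hk₂ ?_
  rw [← Comp.map_map h h', ← Comp.map_map h h', heq]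

theorem push_mem_Cmod {S : G.EState} (h : S.1 ⊆ t) : push S t ∈ G.Cmod t.card (G.jdeg S) := by
  by_cases hinj : Set.InjOn (Comp.map h) {k | S.2 k}
  · rw [push_of_injOn h hinj]
    exact Finsupp.single_mem_supported ℤ _ ⟨rfl, jdeg_pushState h hinj⟩
  · rw [push_of_not_injOn h hinj]
    exact Submodule.zero_mem _

end Push

/-! ### The differential -/

section Differential

variable {G : OGraph}

theorem addEdge_of_notMem {S : G.EState} {e : Fin G.n} (he : e ∉ S.1) :
    G.addEdge S e = push S (insert e S.1) := by
  have hsub : S.1 ⊆ insert e S.1 := Finset.subset_insert _ _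
  rw [addEdge, if_neg he]
  by_cases hinj : Set.InjOn (Comp.map hsub) {k | S.2 k}
  · rw [push_of_injOn hsub hinj]
    refine if_neg ?_
    rintro ⟨k₁, k₂, hne, heq, hk₁, hk₂⟩
    exact hne (hinj hk₁ hk₂ heq)
  · rw [push_of_not_injOn hsub hinj]
    refine if_pos ?_
    simp only [Set.InjOn, not_forall] at hinj
    obtain ⟨k₁, hk₁, k₂, hk₂, heq, hne⟩ := hinj
    exact ⟨k₁, k₂, hne, heq, hk₁, hk₂⟩

theorem diff_single (S : G.EState) :
    G.diff (Finsupp.single S 1) = ∑ e ∈ S.1ᶜ, edgeSign S.1 e • push S (insert e S.1) := by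
  have hdiff : G.diff (Finsupp.single S 1) = G.dState S := by simp [diff]
  rw [hdiff, dState]
  symm
  refine Finset.sum_subset_zero_on_sdiff (Finset.subset_univ _) (fun e he => ?_) fun e he => ?_
  · have he : e ∈ S.1 := by simpa using he
    rw [addEdge, if_pos he, smul_zero]
  · rw [addEdge_of_notMem (Finset.mem_compl.1 he), edgeSign]

theorem diff_push {S : G.EState} {t : Finset (Fin G.n)} (h : S.1 ⊆ t) :
    G.diff (push S t) = ∑ e ∈ tᶜ, edgeSign t e • push S (insert e t) := by
  by_cases hinj : Set.InjOn (Comp.map h) {k | S.2 k}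
  · rw [push_of_injOn h hinj, diff_single]
    refine Finset.sum_congr rfl fun e _ => ?_
    exact congrArg _ (push_pushState h (Finset.subset_insert _ _) hinj)
  · rw [push_of_not_injOn h hinj, map_zero]
    refine (Finset.sum_eq_zero fun e _ => ?_).symm
    rw [push_eq_zero_of_subset h (Finset.subset_insert _ _) hinj, smul_zero]

theorem diff_diff_single (S : G.EState) : G.diff (G.diff (Finsupp.single S 1)) = 0 := by
  have hsum : G.diff (G.diff (Finsupp.single S 1)) = ∑ e ∈ S.1ᶜ, ∑ f ∈ (insert e S.1)ᶜ,
      (edgeSign S.1 e * edgeSign (insert e S.1) f) • push S (insert f (insert e S.1)) := by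
    simp only [diff_single, map_sum, map_smul, diff_push (Finset.subset_insert _ S.1),
      Finset.smul_sum, smul_smul]
  rw [hsum, Finset.sum_sigma']
  -- The two orders in which a pair of edges can be added contribute with opposite signs.
  refine Finset.sum_involution (fun p _ => ⟨p.2, p.1⟩) ?_ ?_ ?_ fun _ _ => rfl
  · rintro ⟨e, f⟩ hef
    obtain ⟨he, hfe, hf⟩ : e ∉ S.1 ∧ f ≠ e ∧ f ∉ S.1 := by simpa using hef
    rw [edgeSign_mul_edgeSign_insert_comm he hf hfe.symm, neg_smul, Finset.insert_comm,
      neg_add_cancel]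
  · rintro ⟨e, f⟩ hef - heq
    obtain ⟨-, hfe, -⟩ : e ∉ S.1 ∧ f ≠ e ∧ f ∉ S.1 := by simpa using hef
    exact hfe (congrArg Sigma.fst heq)
  · rintro ⟨e, f⟩ hef
    obtain ⟨he, hfe, hf⟩ : e ∉ S.1 ∧ f ≠ e ∧ f ∉ S.1 := by simpa using hef
    simpa using ⟨hf, hfe.symm, he⟩

theorem diff_diff (x : G.Cochains) : G.diff (G.diff x) = 0 := by
  have hcomp : G.diff ∘ₗ G.diff = 0 :=
    Finsupp.lhom_ext' fun S => LinearMap.ext_ring (diff_diff_single S)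
  exact LinearMap.congr_fun hcomp x

theorem diff_mem_Cmod {i j : ℕ} {x : G.Cochains} (hx : x ∈ G.Cmod i j) :
    G.diff x ∈ G.Cmod (i + 1) j := by
  refine linearMap_mem_of_mem_supported ?_ hx
  rintro S ⟨rfl, rfl⟩
  rw [diff_single]
  refine Submodule.sum_mem _ fun e he => Submodule.smul_mem _ _ ?_
  rw [← Finset.card_insert_of_notMem (Finset.mem_compl.1 he)]
  exact push_mem_Cmod (Finset.subset_insert e S.1)

end Differential

/-! ### Functoriality and homotopy invariance -/

section Functoriality

variable {G H K : OGraph} {i j : ℕ}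

/-- Linear maps of cochains that preserve the bidegree and commute with the differentials. -/
structure IsCochainMap (f : G.Cochains →ₗ[ℤ] H.Cochains) : Prop where
  map_diff : ∀ x, f (G.diff x) = H.diff (f x)
  map_mem : ∀ {i j x}, x ∈ G.Cmod i j → f x ∈ H.Cmod i j

/-- Linear maps of cochains of bidegree `(-1, 0)`, the shape of a cochain homotopy. -/
structure LowersDegree (h : G.Cochains →ₗ[ℤ] H.Cochains) : Prop where
  map_eq_zero : ∀ {j x}, x ∈ G.Cmod 0 j → h x = 0
  map_mem : ∀ {i j x}, x ∈ G.Cmod (i + 1) j → h x ∈ H.Cmod i j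

namespace IsCochainMap

variable {f : G.Cochains →ₗ[ℤ] H.Cochains} {g : H.Cochains →ₗ[ℤ] K.Cochains}

theorem id : IsCochainMap (LinearMap.id : G.Cochains →ₗ[ℤ] G.Cochains) :=
  ⟨fun _ => rfl, fun hx => hx⟩

theorem comp (hg : IsCochainMap g) (hf : IsCochainMap f) : IsCochainMap (g ∘ₗ f) where
  map_diff x := by rw [LinearMap.comp_apply, LinearMap.comp_apply, hf.map_diff, hg.map_diff]
  map_mem hx := hg.map_mem (hf.map_mem hx)

theorem map_mem_Zmod (hf : IsCochainMap f) {x : G.Cochains} (hx : x ∈ G.Zmod i j) :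
    f x ∈ H.Zmod i j := by
  refine ⟨LinearMap.mem_ker.2 ?_, hf.map_mem hx.2⟩
  rw [← hf.map_diff, LinearMap.mem_ker.1 hx.1, map_zero]

theorem map_mem_Bmod (hf : IsCochainMap f) {x : G.Cochains} (hx : x ∈ G.Bmod i j) :
    f x ∈ H.Bmod i j := by
  cases i with
  | zero =>
    obtain rfl : x = 0 := hx
    rw [map_zero]
    exact Submodule.zero_mem _
  | succ i =>
    obtain ⟨y, hy, rfl⟩ := hx
    exact ⟨f y, hf.map_mem hy, (hf.map_diff y).symm⟩

end IsCochainMap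

namespace Hmod

/-- The cohomology class of a cocycle. -/
noncomputable def mk : G.Zmod i j →+ G.Hmod i j :=
  QuotientAddGroup.mk' (AddSubgroup.comap (G.Zmod i j).toAddSubgroup.subtype
    (G.Bmod i j).toAddSubgroup)

theorem mk_surjective : Function.Surjective (mk : G.Zmod i j → G.Hmod i j) :=
  QuotientAddGroup.mk'_surjective _

theorem mk_eq_mk_iff {x y : G.Zmod i j} : mk x = mk y ↔ (y - x : G.Cochains) ∈ G.Bmod i j := by
  rw [sub_eq_neg_add]
  exact QuotientAddGroup.eq

/-- The map induced on cohomology by a cochain map. -/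
noncomputable def map {f : G.Cochains →ₗ[ℤ] H.Cochains} (hf : IsCochainMap f) (i j : ℕ) :
    G.Hmod i j →+ H.Hmod i j :=
  QuotientAddGroup.map _ _ (f.restrict fun _ hx => hf.map_mem_Zmod hx).toAddMonoidHom
    fun _ hx => hf.map_mem_Bmod hx

theorem map_mk {f : G.Cochains →ₗ[ℤ] H.Cochains} (hf : IsCochainMap f) (x : G.Zmod i j) :
    map hf i j (mk x) = mk ⟨f x, hf.map_mem_Zmod x.2⟩ :=
  rfl

theorem map_eq_map_of_homotopy {f g h : G.Cochains →ₗ[ℤ] H.Cochains} (hf : IsCochainMap f)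
    (hg : IsCochainMap g) (hh : LowersDegree h)
    (hom : ∀ x, g x = f x + (H.diff (h x) + h (G.diff x))) : map hf i j = map hg i j := by
  refine AddMonoidHom.ext fun ξ => ?_
  obtain ⟨⟨x, hker, hx⟩, rfl⟩ := mk_surjective ξ
  rw [map_mk, map_mk, mk_eq_mk_iff]
  have hsub : g x - f x = H.diff (h x) := by
    rw [hom, LinearMap.mem_ker.1 hker, map_zero, add_zero, add_sub_cancel_left]
  rw [hsub]
  cases i with
  | zero =>
    rw [hh.map_eq_zero hx, map_zero]
    exact Submodule.zero_mem _
  | succ i => exact ⟨h x, hh.map_mem hx, rfl⟩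

/-- The isomorphism induced by a deformation retraction `r` with inclusion `ι`. -/
noncomputable def equivOfDeformationRetract {r : G.Cochains →ₗ[ℤ] H.Cochains}
    {ι : H.Cochains →ₗ[ℤ] G.Cochains} {h : G.Cochains →ₗ[ℤ] G.Cochains} (hr : IsCochainMap r)
    (hι : IsCochainMap ι) (hh : LowersDegree h) (hrι : ∀ y, r (ι y) = y)
    (hom : ∀ x, x = ι (r x) + (G.diff (h x) + h (G.diff x))) (i j : ℕ) :
    G.Hmod i j ≃+ H.Hmod i j where
  __ := map hr i j
  invFun := map hι i j
  left_inv ξ := by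
    have hmap : map (hι.comp hr) i j = map IsCochainMap.id i j :=
      map_eq_map_of_homotopy _ _ hh hom
    obtain ⟨x, rfl⟩ := mk_surjective ξ
    exact DFunLike.congr_fun hmap (mk x)
  right_inv η := by
    obtain ⟨y, rfl⟩ := mk_surjective η
    exact congrArg mk (Subtype.ext (hrι y))

end Hmod

theorem LowersDegree.homotopy_mem_Cmod {h : G.Cochains →ₗ[ℤ] G.Cochains} (hh : LowersDegree h)
    {x : G.Cochains} (hx : x ∈ G.Cmod i j) : G.diff (h x) + h (G.diff x) ∈ G.Cmod i j := by
  refine Submodule.add_mem _ ?_ (hh.map_mem (diff_mem_Cmod hx))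
  cases i with
  | zero =>
    rw [hh.map_eq_zero hx, map_zero]
    exact Submodule.zero_mem _
  | succ i => exact diff_mem_Cmod (hh.map_mem hx)

/-- The endomorphism `id - (d ∘ h + h ∘ d)`, which is homotopic to the identity through `h`. -/
noncomputable def homotopyDeformation (h : G.Cochains →ₗ[ℤ] G.Cochains) :
    G.Cochains →ₗ[ℤ] G.Cochains :=
  LinearMap.id - (G.diff ∘ₗ h + h ∘ₗ G.diff)

theorem homotopyDeformation_apply (h : G.Cochains →ₗ[ℤ] G.Cochains) (x : G.Cochains) :
    homotopyDeformation h x = x - (G.diff (h x) + h (G.diff x)) :=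
  rfl

theorem LowersDegree.isCochainMap_homotopyDeformation {h : G.Cochains →ₗ[ℤ] G.Cochains}
    (hh : LowersDegree h) : IsCochainMap (homotopyDeformation h) where
  map_diff x := by
    simp only [homotopyDeformation_apply, map_sub, map_add, diff_diff, map_zero, add_zero, zero_add]
  map_mem hx := Submodule.sub_mem _ hx (hh.homotopy_mem_Cmod hx)

/-- A cochain map `p` with a bidegree-preserving linear section `q` induces an isomorphism on
cohomology if `h` contracts its kernel. -/
noncomputable def Hmod.equivOfContractibleKernel {p : G.Cochains →ₗ[ℤ] H.Cochains}
    {q : H.Cochains →ₗ[ℤ] G.Cochains} {h : G.Cochains →ₗ[ℤ] G.Cochains} (hp : IsCochainMap p)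
    (hq : ∀ {i j y}, y ∈ H.Cmod i j → q y ∈ G.Cmod i j) (hpq : ∀ y, p (q y) = y)
    (hh : LowersDegree h) (hph : ∀ x, p (h x) = 0)
    (hker : ∀ x, p x = 0 → G.diff (h x) + h (G.diff x) = x) (i j : ℕ) :
    G.Hmod i j ≃+ H.Hmod i j :=
  have hfactor (x : G.Cochains) : homotopyDeformation h (q (p x)) = homotopyDeformation h x := by
    have hzero : p (q (p x) - x) = 0 := by rw [map_sub, hpq, sub_self]
    rw [← sub_eq_zero, ← map_sub, homotopyDeformation_apply, hker _ hzero, sub_self]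
  have hι : IsCochainMap (homotopyDeformation h ∘ₗ q) :=
    { map_diff := fun y => by
        rw [LinearMap.comp_apply, LinearMap.comp_apply,
          ← hh.isCochainMap_homotopyDeformation.map_diff, ← hfactor (G.diff (q y)), hp.map_diff,
          hpq]
      map_mem := fun hy => hh.isCochainMap_homotopyDeformation.map_mem (hq hy) }
  have hpι (y : H.Cochains) : p (homotopyDeformation h (q y)) = y := by
    rw [homotopyDeformation_apply, map_sub, map_add, hp.map_diff, hph, hph, map_zero, add_zero,
      sub_zero, hpq]
  have hom (x : G.Cochains) :
      x = homotopyDeformation h (q (p x)) + (G.diff (h x) + h (G.diff x)) := by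
    rw [hfactor, homotopyDeformation_apply, sub_add_cancel]
  equivOfDeformationRetract hp hι hh hpι hom i j

end Functoriality

/-! ### Restriction to a spanning subgraph -/

/-- An identification of `H` with a spanning subgraph of `G` that respects the orders of the
edges. -/
structure SpanningEmbedding (H G : OGraph) where
  vert : H.V ≃ G.V
  edge : Fin H.n ↪o Fin G.n
  ends_edge : ∀ k, G.ends (edge k) = (H.ends k).map vert

namespace SpanningEmbedding

variable {G H : OGraph} (φ : SpanningEmbedding H G)

/-- The edges of `G` corresponding to the edges `s` of `H`. -/
def mapEdges (s : Finset (Fin H.n)) : Finset (Fin G.n) := s.map φ.edge.toEmbedding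

theorem edge_mem_mapEdges {s : Finset (Fin H.n)} {k : Fin H.n} :
    φ.edge k ∈ φ.mapEdges s ↔ k ∈ s :=
  Finset.mem_map' φ.edge.toEmbedding

theorem mapEdges_insert (k : Fin H.n) (s : Finset (Fin H.n)) :
    φ.mapEdges (insert k s) = insert (φ.edge k) (φ.mapEdges s) :=
  Finset.map_insert _ _ _

theorem card_mapEdges (s : Finset (Fin H.n)) : (φ.mapEdges s).card = s.card :=
  Finset.card_map _

theorem rel_mapEdges_iff {s : Finset (Fin H.n)} {u v : H.V} :
    G.rel (φ.mapEdges s) (φ.vert u) (φ.vert v) ↔ H.rel s u v := by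
  have hends (k : Fin H.n) : G.ends (φ.edge k) = s(φ.vert u, φ.vert v) ↔ H.ends k = s(u, v) := by
    rw [φ.ends_edge, ← Sym2.map_mk, (Sym2.map.injective φ.vert.injective).eq_iff]
  simp [rel, mapEdges, hends]

/-- The components of a spanning subgraph of `H` are those of its image in `G`. -/
def compEquiv (s : Finset (Fin H.n)) : H.Comp s ≃ G.Comp (φ.mapEdges s) :=
  Quot.congr φ.vert fun _ _ => φ.rel_mapEdges_iff.symm

theorem compEquiv_map {s t : Finset (Fin H.n)} (h : s ⊆ t) (h' : φ.mapEdges s ⊆ φ.mapEdges t)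
    (k : H.Comp s) : φ.compEquiv t (Comp.map h k) = Comp.map h' (φ.compEquiv s k) := by
  induction k using Quot.ind
  rfl

/-- The state of `G` corresponding to a state of `H`. -/
abbrev mapState (T : H.EState) : G.EState :=
  ⟨φ.mapEdges T.1, fun K => T.2 ((φ.compEquiv T.1).symm K)⟩

theorem mapState_injective : Function.Injective φ.mapState := by
  rintro ⟨s, P⟩ ⟨t, Q⟩ h
  obtain rfl : s = t := Finset.map_injective _ (congrArg Sigma.fst h)
  have hcolor := eq_of_heq (Sigma.mk.inj h).2
  refine congrArg (Sigma.mk s) (funext fun k => ?_)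
  simpa using congrFun hcolor (φ.compEquiv s k)

theorem mem_range_mapState_iff {S : G.EState} :
    S ∈ Set.range φ.mapState ↔ ∀ e ∈ S.1, e ∈ Set.range φ.edge := by
  refine ⟨?_, fun hS => ?_⟩
  · rintro ⟨T, rfl⟩ e he
    obtain ⟨k, -, rfl⟩ := Finset.mem_map.1 he
    exact ⟨k, rfl⟩
  · obtain ⟨s, P⟩ := S
    have hsub : s ⊆ φ.mapEdges Finset.univ := fun e he => by
      obtain ⟨k, rfl⟩ := hS e he
      exact φ.edge_mem_mapEdges.2 (Finset.mem_univ k)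
    obtain ⟨t, -, rfl⟩ := Finset.subset_map_iff.1 hsub
    refine ⟨⟨t, fun k => P (φ.compEquiv t k)⟩, congrArg (Sigma.mk (φ.mapEdges t)) ?_⟩
    exact funext fun K => congrArg P ((φ.compEquiv t).apply_symm_apply K)

theorem jdeg_mapState (T : H.EState) : G.jdeg (φ.mapState T) = H.jdeg T :=
  Nat.card_congr ((φ.compEquiv T.1).symm.subtypeEquiv fun _ => Iff.rfl)

theorem bidegree_mapState_iff {T : H.EState} {i j : ℕ} :
    (φ.mapState T).1.card = i ∧ G.jdeg (φ.mapState T) = j ↔ T.1.card = i ∧ H.jdeg T = j := by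
  rw [jdeg_mapState, card_mapEdges]

theorem pushState_mapState {T : H.EState} {t : Finset (Fin H.n)} (h : T.1 ⊆ t)
    (h' : (φ.mapState T).1 ⊆ φ.mapEdges t) :
    pushState (φ.mapState T) h' = φ.mapState (pushState T h) := by
  refine congrArg (Sigma.mk (φ.mapEdges t)) (funext fun K => propext ?_)
  refine (φ.compEquiv T.1).symm.exists_congr fun k => and_congr ?_ Iff.rfl
  rw [Equiv.eq_symm_apply, φ.compEquiv_map h h', Equiv.apply_symm_apply]

theorem injOn_map_mapState_iff {T : H.EState} {t : Finset (Fin H.n)} (h : T.1 ⊆ t)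
    (h' : (φ.mapState T).1 ⊆ φ.mapEdges t) :
    Set.InjOn (Comp.map h') {K | (φ.mapState T).2 K} ↔ Set.InjOn (Comp.map h) {k | T.2 k} := by
  have himage : {K | (φ.mapState T).2 K} = φ.compEquiv T.1 '' {k | T.2 k} :=
    ((φ.compEquiv T.1).image_eq_preimage_symm _).symm
  have hcomm : Comp.map h' ∘ φ.compEquiv T.1 = φ.compEquiv t ∘ Comp.map h :=
    funext fun k => (φ.compEquiv_map h h' k).symm
  rw [himage, ← (φ.compEquiv T.1).injective.injOn.comp_iff, hcomm]
  exact ⟨fun hinj => hinj.of_comp, fun hinj => (φ.compEquiv t).injective.comp_injOn hinj⟩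

/-- Extension of cochains by zero along the inclusion of a spanning subgraph. -/
noncomputable def extend : H.Cochains →ₗ[ℤ] G.Cochains := Finsupp.lmapDomain ℤ ℤ φ.mapState

/-- Restriction of cochains to the states that live on a spanning subgraph. -/
noncomputable def restrict : G.Cochains →ₗ[ℤ] H.Cochains :=
  Finsupp.lcomapDomain φ.mapState φ.mapState_injective

theorem extend_single (T : H.EState) (c : ℤ) :
    φ.extend (Finsupp.single T c) = Finsupp.single (φ.mapState T) c :=
  Finsupp.mapDomain_single

theorem restrict_extend (y : H.Cochains) : φ.restrict (φ.extend y) = y :=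
  Finsupp.comapDomain_mapDomain _ φ.mapState_injective y

theorem restrict_apply (x : G.Cochains) (T : H.EState) : φ.restrict x T = x (φ.mapState T) :=
  rfl

theorem restrict_single_mapState (T : H.EState) (c : ℤ) :
    φ.restrict (Finsupp.single (φ.mapState T) c) = Finsupp.single T c := by
  rw [← extend_single, restrict_extend]

theorem restrict_single_of_notMem {S : G.EState} {e : Fin G.n} (he : e ∈ S.1)
    (hrange : e ∉ Set.range φ.edge) (c : ℤ) : φ.restrict (Finsupp.single S c) = 0 := by
  refine Finsupp.ext fun T => Finsupp.single_eq_of_ne fun hTS => ?_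
  exact hrange (φ.mem_range_mapState_iff.1 ⟨T, hTS⟩ e he)

theorem restrict_push_of_notMem {S : G.EState} {t : Finset (Fin G.n)} (h : S.1 ⊆ t)
    {e : Fin G.n} (he : e ∈ t) (hrange : e ∉ Set.range φ.edge) : φ.restrict (push S t) = 0 := by
  by_cases hinj : Set.InjOn (Comp.map h) {k | S.2 k}
  · rw [push_of_injOn h hinj, φ.restrict_single_of_notMem (S := pushState S h) he hrange]
  · rw [push_of_not_injOn h hinj, map_zero]

theorem push_mapState {T : H.EState} {t : Finset (Fin H.n)} (h : T.1 ⊆ t) :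
    push (φ.mapState T) (φ.mapEdges t) = φ.extend (push T t) := by
  have h' : (φ.mapState T).1 ⊆ φ.mapEdges t := Finset.map_subset_map.2 h
  have hiff := φ.injOn_map_mapState_iff h h'
  by_cases hinj : Set.InjOn (Comp.map h) {k | T.2 k}
  · rw [push_of_injOn h hinj, push_of_injOn h' (hiff.2 hinj), extend_single, pushState_mapState]
  · rw [push_of_not_injOn h hinj, push_of_not_injOn h' fun hc => hinj (hiff.1 hc), map_zero]

theorem restrict_diff_single_mapState (T : H.EState) :
    φ.restrict (G.diff (Finsupp.single (φ.mapState T) 1)) = H.diff (Finsupp.single T 1) := by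
  rw [diff_single, diff_single, map_sum]
  symm
  refine Finset.sum_of_injOn φ.edge φ.edge.injective.injOn (fun k hk => ?_) (fun e he hnot => ?_)
    fun k _ => ?_
  · simpa using φ.edge_mem_mapEdges.not.2 (Finset.mem_compl.1 hk)
  · have hrange : e ∉ Set.range φ.edge := by
      rintro ⟨k, rfl⟩
      refine hnot ⟨k, ?_, rfl⟩
      simpa using φ.edge_mem_mapEdges.not.1 (Finset.mem_compl.1 he)
    rw [map_smul, φ.restrict_push_of_notMem (Finset.subset_insert _ _)
      (Finset.mem_insert_self _ _) hrange, smul_zero]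
  · have hsign : edgeSign (φ.mapState T).1 (φ.edge k) = edgeSign T.1 k := edgeSign_map φ.edge T.1 k
    have hpush : push (φ.mapState T) (insert (φ.edge k) (φ.mapState T).1) =
        φ.extend (push T (insert k T.1)) := by
      rw [← φ.push_mapState (Finset.subset_insert k T.1), mapEdges_insert]
    rw [hsign, hpush, map_smul, restrict_extend]

theorem isCochainMap_restrict : IsCochainMap φ.restrict where
  map_diff := by
    have hcomp : φ.restrict ∘ₗ G.diff = H.diff ∘ₗ φ.restrict := by
      refine Finsupp.lhom_ext' fun S => LinearMap.ext_ring ?_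
      change φ.restrict (G.diff (Finsupp.single S 1)) = H.diff (φ.restrict (Finsupp.single S 1))
      by_cases hS : S ∈ Set.range φ.mapState
      · obtain ⟨T, rfl⟩ := hS
        rw [restrict_diff_single_mapState, restrict_single_mapState]
      · rw [mem_range_mapState_iff] at hS
        push Not at hS
        obtain ⟨e, he, hrange⟩ := hS
        rw [φ.restrict_single_of_notMem he hrange, map_zero, diff_single, map_sum]
        refine Finset.sum_eq_zero fun f _ => ?_
        rw [map_smul, φ.restrict_push_of_notMem (Finset.subset_insert _ _)
          (Finset.mem_insert_of_mem he) hrange, smul_zero]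
    exact LinearMap.congr_fun hcomp
  map_mem {i j x} hx := by
    refine (Finsupp.mem_supported' ℤ _).2 fun T hT => ?_
    exact (Finsupp.mem_supported' ℤ _).1 hx _ fun hmem => hT (φ.bidegree_mapState_iff.1 hmem)

theorem extend_mem_Cmod {i j : ℕ} {y : H.Cochains} (hy : y ∈ H.Cmod i j) :
    φ.extend y ∈ G.Cmod i j := by
  refine linearMap_mem_of_mem_supported (fun T hT => ?_) hy
  rw [extend_single]
  exact Finsupp.single_mem_supported ℤ _ (φ.bidegree_mapState_iff.2 hT)

theorem mem_supported_of_restrict_eq_zero {x : G.Cochains} (hx : φ.restrict x = 0) :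
    x ∈ Finsupp.supported ℤ ℤ {S : G.EState | ∃ e ∈ S.1, e ∉ Set.range φ.edge} := by
  refine (Finsupp.mem_supported' ℤ _).2 fun S hS => ?_
  obtain ⟨T, rfl⟩ := φ.mem_range_mapState_iff.2 fun e he => by_contra fun h => hS ⟨e, he, h⟩
  rw [← restrict_apply, hx, Finsupp.zero_apply]

/-- The graph `G − e` as a spanning subgraph of `G`. -/
def ofDelG (V : Type) [Fintype V] {n : ℕ} (ends : Fin (n + 1) → Sym2 V) (e : Fin (n + 1)) :
    SpanningEmbedding (delG V ends e) ⟨V, n + 1, ends⟩ where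
  vert := Equiv.refl V
  edge := Fin.succAboveOrderEmb e
  ends_edge k := (congrFun Sym2.map_id (ends (e.succAbove k))).symm

theorem range_edge_ofDelG (V : Type) [Fintype V] {n : ℕ} (ends : Fin (n + 1) → Sym2 V)
    (e : Fin (n + 1)) : Set.range (ofDelG V ends e).edge = {e}ᶜ :=
  Fin.range_succAbove e

end SpanningEmbedding

/-! ### Removing a parallel edge -/

section Parallel

variable {G : OGraph} {a b : Fin G.n}

/-- The state obtained by removing the edge `a`, with the colours inherited from `S`. -/
abbrev eraseState (a : Fin G.n) (S : G.EState) : G.EState :=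
  pullState S (Finset.erase_subset a S.1)

/-- The homotopy that removes the edge `a`, with sign, from the states containing both `a` and `b`;
it is of interest when `a` and `b` are parallel. -/
noncomputable def parallelHomotopy (a b : Fin G.n) : G.Cochains →ₗ[ℤ] G.Cochains :=
  Finsupp.linearCombination ℤ fun S =>
    if a ∈ S.1 ∧ b ∈ S.1 then
      edgeSign S.1 a • Finsupp.single (eraseState a S) 1
    else 0

theorem parallelHomotopy_single_of_mem {S : G.EState} (ha : a ∈ S.1) (hb : b ∈ S.1) :
    parallelHomotopy a b (Finsupp.single S 1) =
      edgeSign S.1 a • Finsupp.single (eraseState a S) 1 := by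
  rw [parallelHomotopy, Finsupp.linearCombination_single, one_smul, if_pos ⟨ha, hb⟩]

theorem parallelHomotopy_single_of_not {S : G.EState} (h : ¬(a ∈ S.1 ∧ b ∈ S.1)) :
    parallelHomotopy a b (Finsupp.single S 1) = 0 := by
  rw [parallelHomotopy, Finsupp.linearCombination_single, if_neg h, smul_zero]

theorem parallelHomotopy_push_of_notMem {S : G.EState} {t : Finset (Fin G.n)} (h : S.1 ⊆ t)
    (ha : a ∉ t) : parallelHomotopy a b (push S t) = 0 := by
  by_cases hinj : Set.InjOn (Comp.map h) {k | S.2 k}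
  · rw [push_of_injOn h hinj, parallelHomotopy_single_of_not fun hab => ha hab.1]
  · rw [push_of_not_injOn h hinj, map_zero]

theorem Comp.map_injective_of_parallel (hpar : G.ends a = G.ends b) {s t : Finset (Fin G.n)}
    (hb : b ∈ s) (h : s ⊆ t) (ht : t ⊆ insert a s) :
    Function.Injective (Comp.map h : G.Comp s → _) := by
  refine Comp.map_injective_of_rel h ?_
  rintro u v ⟨e, he, huv⟩
  rcases Finset.mem_insert.1 (ht he) with rfl | he
  · exact ⟨b, hb, hpar ▸ huv⟩
  · exact ⟨e, he, huv⟩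

theorem Comp.map_erase_injective_of_parallel (hpar : G.ends a = G.ends b) (hne : a ≠ b)
    {s : Finset (Fin G.n)} (hb : b ∈ s) :
    Function.Injective (Comp.map (Finset.erase_subset a s) : G.Comp (s.erase a) → _) :=
  Comp.map_injective_of_parallel hpar (Finset.mem_erase.2 ⟨hne.symm, hb⟩) _
    (Finset.insert_erase_subset a s)

theorem push_eraseState (hpar : G.ends a = G.ends b) (hne : a ≠ b) {S : G.EState} (hb : b ∈ S.1) :
    push (eraseState a S) S.1 = Finsupp.single S 1 := by
  have hinj := Comp.map_erase_injective_of_parallel hpar hne hb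
  rw [push_of_injOn (S := eraseState a S) (Finset.erase_subset a S.1) hinj.injOn,
    pushState_pullState]

theorem jdeg_eraseState (hpar : G.ends a = G.ends b) (hne : a ≠ b) {S : G.EState} (hb : b ∈ S.1) :
    G.jdeg (eraseState a S) = G.jdeg S := by
  have hinj := Comp.map_erase_injective_of_parallel hpar hne hb
  rw [← jdeg_pushState (S := eraseState a S) (Finset.erase_subset a S.1) hinj.injOn,
    pushState_pullState]

theorem parallelHomotopy_push_insert (hpar : G.ends a = G.ends b) {S : G.EState}
    {t : Finset (Fin G.n)} (h : S.1 ⊆ t) (hb : b ∈ t) (ha : a ∉ t) :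
    parallelHomotopy a b (push S (insert a t)) = edgeSign t a • push S t := by
  have hsub : t ⊆ insert a t := Finset.subset_insert a t
  by_cases hinj : Set.InjOn (Comp.map h) {k | S.2 k}
  · have hinj' := Comp.map_injective_of_parallel hpar hb hsub (Finset.Subset.refl _)
    have herase : eraseState a (pushState (pushState S h) hsub) = pushState S h := by
      refine Eq.trans ?_ (pullState_pushState (S := pushState S h) hsub hinj')
      simp only [eraseState, pushState, Finset.erase_insert ha]
    rw [← push_pushState h hsub hinj, push_of_injOn (S := pushState S h) hsub hinj'.injOn,
      push_of_injOn h hinj, parallelHomotopy_single_of_mem (Finset.mem_insert_self a t)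
        (Finset.mem_insert_of_mem hb), herase, ← edgeSign_insert_self ha]
  · rw [push_of_not_injOn h hinj, push_eq_zero_of_subset h hsub hinj, map_zero, smul_zero]

theorem diff_parallelHomotopy_add_of_notMem (hpar : G.ends a = G.ends b) {S : G.EState}
    (ha : a ∉ S.1) (hb : b ∈ S.1) :
    G.diff (parallelHomotopy a b (Finsupp.single S 1)) +
      parallelHomotopy a b (G.diff (Finsupp.single S 1)) = Finsupp.single S 1 := by
  rw [parallelHomotopy_single_of_not fun hab => ha hab.1, map_zero, zero_add, diff_single, map_sum,
    Finset.sum_eq_single_of_mem a (Finset.mem_compl.2 ha)]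
  · rw [map_smul, parallelHomotopy_push_insert hpar (Finset.Subset.refl _) hb ha, smul_smul,
      edgeSign_mul_self, one_smul, push_self]
  · intro f _ hfa
    have haf : a ∉ insert f S.1 := by simp [ha, hfa.symm]
    rw [map_smul, parallelHomotopy_push_of_notMem (Finset.subset_insert _ _) haf, smul_zero]

theorem diff_parallelHomotopy_add_push (hpar : G.ends a = G.ends b) {R : G.EState}
    (ha : a ∉ R.1) (hb : b ∈ R.1) :
    G.diff (parallelHomotopy a b (push R (insert a R.1))) +
      parallelHomotopy a b (G.diff (push R (insert a R.1))) = push R (insert a R.1) := by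
  have hcancel : ∀ f ∈ R.1ᶜ.erase a,
      edgeSign R.1 a • edgeSign R.1 f • push R (insert f R.1) +
        parallelHomotopy a b
          (edgeSign (insert a R.1) f • push R (insert f (insert a R.1))) = 0 := by
    intro f hf
    obtain ⟨hfa, hf⟩ : f ≠ a ∧ f ∉ R.1 := by simpa using hf
    have haf : a ∉ insert f R.1 := by simp [ha, hfa.symm]
    rw [map_smul, Finset.insert_comm, parallelHomotopy_push_insert hpar
      (Finset.subset_insert _ _) (Finset.mem_insert_of_mem hb) haf, smul_smul, smul_smul,
      edgeSign_insert_mul_edgeSign_insert ha hf hfa.symm, ← add_smul, add_neg_cancel, zero_smul]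
  rw [parallelHomotopy_push_insert hpar (Finset.Subset.refl _) hb ha, map_smul,
    diff_push (Finset.Subset.refl _), diff_push (Finset.subset_insert _ _), Finset.compl_insert,
    map_sum, Finset.smul_sum, ← Finset.add_sum_erase _ _ (Finset.mem_compl.2 ha), add_assoc,
    ← Finset.sum_add_distrib, Finset.sum_eq_zero hcancel, add_zero, smul_smul, edgeSign_mul_self,
    one_smul]

theorem diff_parallelHomotopy_add_single (hpar : G.ends a = G.ends b) (hne : a ≠ b) {S : G.EState}
    (hb : b ∈ S.1) :
    G.diff (parallelHomotopy a b (Finsupp.single S 1)) +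
      parallelHomotopy a b (G.diff (Finsupp.single S 1)) = Finsupp.single S 1 := by
  by_cases ha : a ∈ S.1
  · have hR := diff_parallelHomotopy_add_push hpar
      (R := eraseState a S) (Finset.notMem_erase a S.1) (Finset.mem_erase.2 ⟨hne.symm, hb⟩)
    rwa [Finset.insert_erase ha, push_eraseState hpar hne hb] at hR
  · exact diff_parallelHomotopy_add_of_notMem hpar ha hb

theorem diff_parallelHomotopy_add (hpar : G.ends a = G.ends b) (hne : a ≠ b) {x : G.Cochains}
    (hx : x ∈ Finsupp.supported ℤ ℤ {S : G.EState | b ∈ S.1}) :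
    G.diff (parallelHomotopy a b x) + parallelHomotopy a b (G.diff x) = x := by
  have hzero : homotopyDeformation (parallelHomotopy a b) x ∈ (⊥ : Submodule ℤ G.Cochains) :=
    linearMap_mem_of_mem_supported
      (fun S hS => sub_eq_zero.2 (diff_parallelHomotopy_add_single hpar hne hS).symm) hx
  exact (sub_eq_zero.1 hzero).symm

theorem lowersDegree_parallelHomotopy (hpar : G.ends a = G.ends b) (hne : a ≠ b) :
    LowersDegree (parallelHomotopy a b) where
  map_eq_zero {j x} hx := by
    rw [← Submodule.mem_bot ℤ]
    refine linearMap_mem_of_mem_supported ?_ hx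
    rintro S ⟨hcard, -⟩
    refine parallelHomotopy_single_of_not fun hab => ?_
    exact Finset.notMem_empty a (Finset.card_eq_zero.1 hcard ▸ hab.1)
  map_mem {i j x} hx := by
    refine linearMap_mem_of_mem_supported ?_ hx
    rintro S ⟨hcard, hj⟩
    by_cases hab : a ∈ S.1 ∧ b ∈ S.1
    · rw [parallelHomotopy_single_of_mem hab.1 hab.2]
      refine Submodule.smul_mem _ _ (Finsupp.single_mem_supported ℤ _ ⟨?_, ?_⟩)
      · exact (Finset.card_erase_of_mem hab.1).trans (by rw [hcard, Nat.add_sub_cancel])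
      · rw [jdeg_eraseState hpar hne hab.2, hj]
    · rw [parallelHomotopy_single_of_not hab]
      exact Submodule.zero_mem _

theorem SpanningEmbedding.restrict_parallelHomotopy {H : OGraph} (φ : SpanningEmbedding H G)
    (hb : b ∉ Set.range φ.edge) (hne : a ≠ b) (x : G.Cochains) :
    φ.restrict (parallelHomotopy a b x) = 0 := by
  have hcomp : φ.restrict ∘ₗ parallelHomotopy a b = 0 := by
    refine Finsupp.lhom_ext' fun S => LinearMap.ext_ring ?_
    change φ.restrict (parallelHomotopy a b (Finsupp.single S 1)) = 0
    by_cases hab : a ∈ S.1 ∧ b ∈ S.1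
    · rw [parallelHomotopy_single_of_mem hab.1 hab.2, map_smul, φ.restrict_single_of_notMem
        (S := eraseState a S) (Finset.mem_erase.2 ⟨hne.symm, hab.2⟩) hb, smul_zero]
    · rw [parallelHomotopy_single_of_not hab, map_zero]
  exact LinearMap.congr_fun hcomp x

/-- The isomorphism induced by restriction to a spanning subgraph that misses only an edge `b`
parallel to another edge `a`. -/
noncomputable def SpanningEmbedding.equivOfParallel {H : OGraph} (φ : SpanningEmbedding H G)
    (hrange : Set.range φ.edge = {b}ᶜ) (hne : a ≠ b) (hpar : G.ends a = G.ends b) (i j : ℕ) :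
    G.Hmod i j ≃+ H.Hmod i j :=
  have hb : b ∉ Set.range φ.edge := by simp [hrange]
  have hker (x : G.Cochains) (hx : φ.restrict x = 0) :
      G.diff (parallelHomotopy a b x) + parallelHomotopy a b (G.diff x) = x := by
    refine diff_parallelHomotopy_add hpar hne ?_
    simpa [hrange] using φ.mem_supported_of_restrict_eq_zero hx
  Hmod.equivOfContractibleKernel φ.isCochainMap_restrict φ.extend_mem_Cmod φ.restrict_extend
    (lowersDegree_parallelHomotopy hpar hne) (φ.restrict_parallelHomotopy hb hne) hker i j

end Parallel

end OGraph

/-- if `e₁` and `e₂` are parallel edges of `G` (distinct edges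
joining the same pair of vertices), then `H^{i,j}(G) ≅ H^{i,j}(G − e₂)` for all
`i, j`; consequently the graph cohomology is unchanged when multiple edges are
replaced by single edges. -/
theorem cohomology_parallel_edge (V : Type) [Fintype V] {n : ℕ}
    (ends : Fin (n + 1) → Sym2 V) (e₁ e₂ : Fin (n + 1)) (hne : e₁ ≠ e₂)
    (hpar : ends e₁ = ends e₂) :
    ∀ i j : ℕ, Nonempty
      ((OGraph.mk V (n + 1) ends).Hmod i j ≃+ (OGraph.delG V ends e₂).Hmod i j) := by
  intro i j
  exact ⟨(OGraph.SpanningEmbedding.ofDelG V ends e₂).equivOfParallel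
    (OGraph.SpanningEmbedding.range_edge_ofDelG V ends e₂) hne hpar i j⟩
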